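/- arXiv:nlin/0102024 — 5 statements merged into one kernel-verified Lean document; each statement's English description precedes it below -/
import Mathlib

section
/- Fix u, ℓ₁, ℓ₂ ∈ ℂ. On ℂ[z₁,z₂], let 𝕃ᵢ = [[Sᵢ, Sᵢ⁻],[Sᵢ⁺, -Sᵢ]] (i = 1,2) be the 2×2 matrices of operators with Sᵢ⁻ = -∂ᵢ, Sᵢ⁺ = zᵢ²∂ᵢ + 2ℓᵢzᵢ, Sᵢ = zᵢ∂ᵢ + ℓᵢ, let K = (u/2)(𝕃₁ - 𝕃₂) + 𝕃₁𝕃₂ with entries K_{AB} (A,B ∈ {1,2}), and let S⁺ = S₁⁺ + S₂⁺ be the total raising generator. Then the commutator relations [S⁺, K₁₂] = K₁₁ - K₂₂, [S⁺, K₁₁] = -K₂₁, [S⁺, K₂₂] = K₂₁, and [S⁺, K₂₁] = 0 hold as identities of differential operators on ℂ[z₁,z₂]. -/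
/-!
Write `S⁺` for the total raising generator. For a `2 × 2` matrix `M` of operators, the four relations
`[S⁺, M₁₂] = M₁₁ - M₂₂`, `[S⁺, M₁₁] = -M₂₁`, `[S⁺, M₂₂] = M₂₁`, `[S⁺, M₂₁] = 0` say exactly that `M`
commutes with the matrix `[[S⁺, 1], [0, S⁺]]` (`commute_raisingMatrix_iff`). The matrices commuting
with a given one form a subalgebra, and `K` is a noncommutative polynomial in `𝕃₁`
and `𝕃₂`, so it suffices to treat `𝕃₁` and `𝕃₂` separately. For these the relations are the `sl(2)` relations `[Sᵢ⁺, Sᵢ⁻] = 2Sᵢ` and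
`[Sᵢ⁺, Sᵢ] = -Sᵢ⁺` at site `i`, together with the fact that the generators at different sites commute.
-/

open MvPolynomial

/-- The two-site polynomial space `ℂ[z₁,z₂]`. -/
abbrev TwoSite : Type := MvPolynomial (Fin 2) ℂ

/-- Multiplication by a polynomial, as an endomorphism of `ℂ[z₁,z₂]`. -/
noncomputable def mulOp (p : TwoSite) : Module.End ℂ TwoSite := LinearMap.mulLeft ℂ p

/-- The partial derivative `∂ᵢ` as an endomorphism of `ℂ[z₁,z₂]`. -/
noncomputable def dOp (i : Fin 2) : Module.End ℂ TwoSite :=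
  (pderiv (R := ℂ) i).toLinearMap

/-- `Sᵢ⁻ = -∂ᵢ`. -/
noncomputable def Sminus (i : Fin 2) : Module.End ℂ TwoSite := -dOp i

/-- `Sᵢ⁺ = zᵢ²∂ᵢ + 2ℓzᵢ`. -/
noncomputable def Splus (i : Fin 2) (ℓ : ℂ) : Module.End ℂ TwoSite :=
  mulOp (X i ^ 2) * dOp i + mulOp (C (2 * ℓ) * X i)

/-- `Sᵢ = zᵢ∂ᵢ + ℓ`. -/
noncomputable def Szero (i : Fin 2) (ℓ : ℂ) : Module.End ℂ TwoSite :=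
  mulOp (X i) * dOp i + mulOp (C ℓ)

/-- The Lax matrix `𝕃ᵢ = [[Sᵢ, Sᵢ⁻],[Sᵢ⁺, -Sᵢ]]` of operator entries. -/
noncomputable def Lax (i : Fin 2) (ℓ : ℂ) : Matrix (Fin 2) (Fin 2) (Module.End ℂ TwoSite) :=
  !![Szero i ℓ, Sminus i; Splus i ℓ, -Szero i ℓ]

/-- The matrix `K = (u/2)(𝕃₁ - 𝕃₂) + 𝕃₁𝕃₂` of second-order differential operators. -/
noncomputable def Kmat (u ℓ₁ ℓ₂ : ℂ) : Matrix (Fin 2) (Fin 2) (Module.End ℂ TwoSite) :=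
  (u / 2) • (Lax 0 ℓ₁ - Lax 1 ℓ₂) + Lax 0 ℓ₁ * Lax 1 ℓ₂

/-- The matrix `[[s, 1], [0, s]]`, that is `s` times the identity plus the elementary matrix `E₁₂`. -/
def raisingMatrix {R : Type*} [Ring R] (s : R) : Matrix (Fin 2) (Fin 2) R := !![s, 1; 0, s]

lemma commute_raisingMatrix_iff {R : Type*} [Ring R] (s : R) (M : Matrix (Fin 2) (Fin 2) R) :
    Commute (raisingMatrix s) M ↔
      (s * M 0 1 - M 0 1 * s = M 0 0 - M 1 1) ∧ (s * M 0 0 - M 0 0 * s = -(M 1 0)) ∧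
      (s * M 1 1 - M 1 1 * s = M 1 0) ∧ (s * M 1 0 - M 1 0 * s = 0) := by
  rw [commute_iff_eq, ← Matrix.ext_iff]
  simp only [raisingMatrix, Fin.forall_fin_two, Matrix.mul_apply, Fin.sum_univ_two]
  simp only [Matrix.of_apply, Matrix.cons_val_zero, Matrix.cons_val_one, Matrix.cons_val',
    Matrix.cons_val_fin_one, one_mul, mul_one, zero_mul, mul_zero, zero_add, add_zero]
  constructor
  · rintro ⟨⟨h00, h01⟩, h10, h11⟩
    refine ⟨?_, ?_, ?_, ?_⟩ <;> grind
  · rintro ⟨h01, h00, h11, h10⟩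
    refine ⟨⟨?_, ?_⟩, ?_, ?_⟩ <;> grind

lemma mulOp_apply (p f : TwoSite) : mulOp p f = p * f := rfl

lemma dOp_apply (i : Fin 2) (f : TwoSite) : dOp i f = pderiv i f := rfl

/-- Mixed partial derivatives of polynomials commute. -/
lemma pderiv_pderiv_comm (i j : Fin 2) (f : TwoSite) :
    pderiv i (pderiv j f) = pderiv j (pderiv i f) := by
  -- The commutator of two derivations is a derivation, so it vanishes once it kills the variables.
  have h : ⁅pderiv (R := ℂ) i, pderiv (R := ℂ) j⁆ = 0 := by
    refine MvPolynomial.derivation_ext fun k => ?_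
    simp [Derivation.commutator_apply, pderiv_X, Pi.single_apply, apply_ite]
  simpa [Derivation.commutator_apply, sub_eq_zero] using DFunLike.congr_fun h f

lemma Splus_mul_Sminus_sub (i : Fin 2) (ℓ : ℂ) :
    Splus i ℓ * Sminus i - Sminus i * Splus i ℓ = Szero i ℓ - -Szero i ℓ := by
  refine LinearMap.ext fun f => ?_
  simp [Splus, Sminus, Szero, mulOp_apply, dOp_apply, Derivation.leibniz, Derivation.leibniz_pow]
  rw [show (C 2 : TwoSite) = 2 from map_ofNat C 2]
  ring

lemma Splus_mul_Szero_sub (i : Fin 2) (ℓ : ℂ) :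
    Splus i ℓ * Szero i ℓ - Szero i ℓ * Splus i ℓ = -Splus i ℓ := by
  refine LinearMap.ext fun f => ?_
  simp [Splus, Szero, mulOp_apply, dOp_apply, Derivation.leibniz, Derivation.leibniz_pow]
  ring

/-- The raising generator at one site commutes with all generators at the other site. -/
lemma commute_Splus_Lax {i j : Fin 2} (hij : i ≠ j) (ℓ ℓ' : ℂ) (a b : Fin 2) :
    Commute (Splus j ℓ') (Lax i ℓ a b) := by
  have h0 : Commute (Splus j ℓ') (Szero i ℓ) := by
    refine LinearMap.ext fun f => ?_
    simp [Splus, Szero, mulOp_apply, dOp_apply, Derivation.leibniz, Derivation.leibniz_pow,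
      pderiv_X_of_ne hij, pderiv_X_of_ne hij.symm, pderiv_pderiv_comm j i]
    ring
  have hm : Commute (Splus j ℓ') (Sminus i) := by
    refine LinearMap.ext fun f => ?_
    simp [Splus, Sminus, mulOp_apply, dOp_apply, Derivation.leibniz, Derivation.leibniz_pow,
      pderiv_X_of_ne hij.symm, pderiv_pderiv_comm j i]
    ring
  have hp : Commute (Splus j ℓ') (Splus i ℓ) := by
    refine LinearMap.ext fun f => ?_
    simp [Splus, mulOp_apply, dOp_apply, Derivation.leibniz, Derivation.leibniz_pow,
      pderiv_X_of_ne hij, pderiv_X_of_ne hij.symm, pderiv_pderiv_comm j i]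
    ring
  fin_cases a <;> fin_cases b
  exacts [h0, hm, hp, h0.neg_right]

lemma commute_raisingMatrix_Lax {i j : Fin 2} (hij : i ≠ j) (ℓ ℓ' : ℂ) :
    Commute (raisingMatrix (Splus i ℓ + Splus j ℓ')) (Lax i ℓ) := by
  have key (a b : Fin 2) : (Splus i ℓ + Splus j ℓ') * Lax i ℓ a b
      - Lax i ℓ a b * (Splus i ℓ + Splus j ℓ')
      = Splus i ℓ * Lax i ℓ a b - Lax i ℓ a b * Splus i ℓ := by
    rw [add_mul, mul_add, (commute_Splus_Lax hij ℓ ℓ' a b).eq, add_sub_add_right_eq_sub]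
  rw [commute_raisingMatrix_iff]
  simp only [key]
  refine ⟨Splus_mul_Sminus_sub i ℓ, Splus_mul_Szero_sub i ℓ, ?_, sub_self _⟩
  -- The `(2,2)` entry of `Lax i ℓ` is `-Szero i ℓ`.
  have hneg {R : Type} [Ring R] (x y : R) (h : x * y - y * x = -x) : x * -y - -y * x = x := by
    rw [mul_neg, neg_mul, ← neg_sub', h, neg_neg]
  exact hneg _ _ (Splus_mul_Szero_sub i ℓ)

/-- The commutator relations `[S⁺, K₁₂] = K₁₁ - K₂₂`, `[S⁺, K₁₁] = -K₂₁`,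
`[S⁺, K₂₂] = K₂₁`, `[S⁺, K₂₁] = 0` between the total raising generator
`S⁺ = S₁⁺ + S₂⁺` and the entries of `K`, as identities of differential operators
on `ℂ[z₁,z₂]`. -/
theorem sl2_K_commutators (u ℓ₁ ℓ₂ : ℂ) :
    let Sp : Module.End ℂ TwoSite := Splus 0 ℓ₁ + Splus 1 ℓ₂
    let K := Kmat u ℓ₁ ℓ₂
    (Sp * K 0 1 - K 0 1 * Sp = K 0 0 - K 1 1) ∧
    (Sp * K 0 0 - K 0 0 * Sp = -(K 1 0)) ∧
    (Sp * K 1 1 - K 1 1 * Sp = K 1 0) ∧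
    (Sp * K 1 0 - K 1 0 * Sp = 0) := by
  intro Sp K
  rw [← commute_raisingMatrix_iff]
  have h₁ : Commute (raisingMatrix Sp) (Lax 0 ℓ₁) := commute_raisingMatrix_Lax (by decide) ℓ₁ ℓ₂
  have h₂ : Commute (raisingMatrix Sp) (Lax 1 ℓ₂) := by
    have h := commute_raisingMatrix_Lax (i := 1) (j := 0) (by decide) ℓ₂ ℓ₁
    rwa [add_comm] at h
  exact ((h₁.sub_right h₂).smul_right (u / 2)).add_right (h₁.mul_right h₂)
end

section
/- Fix u, ℓ₁, ℓ₂ ∈ ℝ and set ℓ₃ = 1-ℓ₁, ℓ₄ = 1-ℓ₂. On the domain Ω, the total sl(2) generators of the four-site realization with weights (ℓ₁, ℓ₂, ℓ₃, ℓ₄) are linear combinations of the operators 𝒟ᵢ: as identities of first-order differential operators, 𝕊⁻ := -Σᵢ₌₁⁴ ∂ᵢ = -Σᵢ₌₁⁴ 𝒟ᵢ, 𝕊 := Σᵢ₌₁⁴ (zᵢ∂ᵢ + ℓᵢ) = Σᵢ₌₁⁴ zᵢ𝒟ᵢ, and 𝕊⁺ := Σᵢ₌₁⁴ (zᵢ²∂ᵢ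 + 2ℓᵢzᵢ) = Σᵢ₌₁⁴ zᵢ²𝒟ᵢ. Consequently the kernel ℛ is sl(2)-invariant: 𝕊⁻ℛ = 𝕊ℛ = 𝕊⁺ℛ = 0. -/
/-!
The zeroth, first and second moments `∑ cᵢ`, `∑ zᵢ cᵢ`, `∑ zᵢ² cᵢ` of the coefficients `cᵢ` of the
operators `𝒟ᵢ` collapse, because each pole `1 / zᵢⱼ` occurs in the two operators at `i` and `j` with
opposite residues: a pole contributes `0`, its residue, and its residue times `zᵢ + zⱼ`,
respectively. The relations `ℓ₃ = 1 - ℓ₁`, `ℓ₄ = 1 - ℓ₂` turn these into `0`, `∑ ℓᵢ` and `∑ 2 ℓᵢ zᵢ`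
(`sum_Dcoef`, `sum_mul_Dcoef`, `sum_sq_mul_Dcoef`), which gives the operator identities.
The kernel is a product of powers of the `zᵢⱼ` whose logarithmic derivatives are exactly `-cᵢ`, so
every `𝒟ᵢ` annihilates it (`Dop_Rker`), and hence so do the three generators.
-/

/-- The partial derivative `∂ᵢ g` of a function `g : ℝ⁴ → ℝ`. -/
noncomputable def pdv (i : Fin 4) (g : (Fin 4 → ℝ) → ℝ) (p : Fin 4 → ℝ) : ℝ :=
  fderiv ℝ g p (Pi.single i 1)

/-- The coefficient functions of the first-order operators `𝒟ᵢ`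
(with `ℓ₃ = 1-ℓ₁`, `ℓ₄ = 1-ℓ₂`, `z₁₂ = p 0 - p 1`, `z₁₄ = p 0 - p 3`,
`z₂₃ = p 1 - p 2`, `z₃₄ = p 2 - p 3`). -/
noncomputable def Dcoef (u ℓ₁ ℓ₂ : ℝ) (i : Fin 4) (p : Fin 4 → ℝ) : ℝ :=
  ![(u + ℓ₁ + (1 - ℓ₂)) / (p 0 - p 3) - (u + (1 - ℓ₂) - ℓ₁) / (p 0 - p 1),
    (u + ℓ₂ + (1 - ℓ₁)) / (p 1 - p 2) + (u + (1 - ℓ₁) - ℓ₂) / (p 0 - p 1),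
    -((u + ℓ₂ + (1 - ℓ₁)) / (p 1 - p 2)) - (u + ℓ₂ - (1 - ℓ₁)) / (p 2 - p 3),
    -((u + ℓ₁ + (1 - ℓ₂)) / (p 0 - p 3)) + (u + ℓ₁ - (1 - ℓ₂)) / (p 2 - p 3)] i

/-- The first-order operator `𝒟ᵢ = ∂ᵢ + (coefficient)`. -/
noncomputable def Dop (u ℓ₁ ℓ₂ : ℝ) (i : Fin 4) (g : (Fin 4 → ℝ) → ℝ) (p : Fin 4 → ℝ) : ℝ :=
  pdv i g p + Dcoef u ℓ₁ ℓ₂ i p * g p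

/-- The kernel `ℛ = z₁₂^{u-ℓ₁+ℓ₄} z₁₄^{-u-ℓ₁-ℓ₄} z₃₂^{-u-ℓ₂-ℓ₃} z₃₄^{u+ℓ₂-ℓ₃}`. -/
noncomputable def Rker (u ℓ₁ ℓ₂ : ℝ) (p : Fin 4 → ℝ) : ℝ :=
  (p 0 - p 1) ^ (u - ℓ₁ + (1 - ℓ₂)) * (p 0 - p 3) ^ (-u - ℓ₁ - (1 - ℓ₂)) *
  (p 2 - p 1) ^ (-u - ℓ₂ - (1 - ℓ₁)) * (p 2 - p 3) ^ (u + ℓ₂ - (1 - ℓ₁))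

theorem sum_Dcoef (u ℓ₁ ℓ₂ : ℝ) (p : Fin 4 → ℝ) :
    ∑ i : Fin 4, Dcoef u ℓ₁ ℓ₂ i p = 0 := by
  simp [Fin.sum_univ_four, Dcoef]
  ring

theorem sum_mul_Dcoef (u ℓ₁ ℓ₂ : ℝ) (p : Fin 4 → ℝ) (h12 : p 0 - p 1 ≠ 0)
    (h14 : p 0 - p 3 ≠ 0) (h23 : p 1 - p 2 ≠ 0) (h34 : p 2 - p 3 ≠ 0) :
    ∑ i : Fin 4, p i * Dcoef u ℓ₁ ℓ₂ i p = ∑ i : Fin 4, ![ℓ₁, ℓ₂, 1 - ℓ₁, 1 - ℓ₂] i := by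
  simp [Fin.sum_univ_four, Dcoef]
  field_simp
  ring

theorem sum_sq_mul_Dcoef (u ℓ₁ ℓ₂ : ℝ) (p : Fin 4 → ℝ) (h12 : p 0 - p 1 ≠ 0)
    (h14 : p 0 - p 3 ≠ 0) (h23 : p 1 - p 2 ≠ 0) (h34 : p 2 - p 3 ≠ 0) :
    ∑ i : Fin 4, p i ^ 2 * Dcoef u ℓ₁ ℓ₂ i p =
      ∑ i : Fin 4, 2 * ![ℓ₁, ℓ₂, 1 - ℓ₁, 1 - ℓ₂] i * p i := by
  simp [Fin.sum_univ_four, Dcoef]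
  field_simp
  ring

/-- The derivative of a power of `zⱼₖ`, written through the logarithmic derivative `a / zⱼₖ`. -/
theorem hasFDerivAt_sub_rpow (j k : Fin 4) (a : ℝ) (p : Fin 4 → ℝ) (h : 0 < p j - p k) :
    HasFDerivAt (fun q : Fin 4 → ℝ => (q j - q k) ^ a)
      (((p j - p k) ^ a * (a / (p j - p k))) •
        (ContinuousLinearMap.proj (R := ℝ) (φ := fun _ : Fin 4 => ℝ) j -
          ContinuousLinearMap.proj (R := ℝ) (φ := fun _ : Fin 4 => ℝ) k)) p := by
  have h1 : HasFDerivAt (fun q : Fin 4 → ℝ => q j - q k)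
      (ContinuousLinearMap.proj (R := ℝ) (φ := fun _ : Fin 4 => ℝ) j -
        ContinuousLinearMap.proj (R := ℝ) (φ := fun _ : Fin 4 => ℝ) k) p :=
    (hasFDerivAt_apply j p).sub (hasFDerivAt_apply k p)
  refine (h1.rpow_const (p := a) (Or.inl h.ne')).congr_fderiv ?_
  rw [Real.rpow_sub_one h.ne']
  congr 1
  ring

/-- The kernel lies in the joint kernel of the operators `𝒟ᵢ` on `Ω`. -/
theorem Dop_Rker (u ℓ₁ ℓ₂ : ℝ) (p : Fin 4 → ℝ) (h12 : 0 < p 0 - p 1)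
    (h14 : 0 < p 0 - p 3) (h32 : 0 < p 2 - p 1) (h34 : 0 < p 2 - p 3) (i : Fin 4) :
    Dop u ℓ₁ ℓ₂ i (Rker u ℓ₁ ℓ₂) p = 0 := by
  have key := (((hasFDerivAt_sub_rpow 0 1 (u - ℓ₁ + (1 - ℓ₂)) p h12).mul
    (hasFDerivAt_sub_rpow 0 3 (-u - ℓ₁ - (1 - ℓ₂)) p h14)).mul
    (hasFDerivAt_sub_rpow 2 1 (-u - ℓ₂ - (1 - ℓ₁)) p h32)).mul
    (hasFDerivAt_sub_rpow 2 3 (u + ℓ₂ - (1 - ℓ₁)) p h34)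
  have hR : fderiv ℝ (Rker u ℓ₁ ℓ₂) p = _ := HasFDerivAt.fderiv key
  -- The operators are written with `z₂₃`, the kernel with `z₃₂`.
  have h23 (x : ℝ) : x / (p 1 - p 2) = -(x / (p 2 - p 1)) := by
    rw [← neg_sub, div_neg]
  rw [Dop, pdv, hR]
  fin_cases i <;> simp [Dcoef, Rker, h23] <;> ring

/-- On the domain `Ω`, the total sl(2) generators of the four-site realization with
weights `(ℓ₁, ℓ₂, 1-ℓ₁, 1-ℓ₂)` are linear combinations of the operators `𝒟ᵢ`:
`𝕊⁻ = -Σ∂ᵢ = -Σ𝒟ᵢ`, `𝕊 = Σ(zᵢ∂ᵢ+ℓᵢ) = Σzᵢ𝒟ᵢ`, `𝕊⁺ = Σ(zᵢ²∂ᵢ+2ℓᵢzᵢ) = Σzᵢ²𝒟ᵢ`;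
consequently the kernel `ℛ` is sl(2)-invariant: `𝕊⁻ℛ = 𝕊ℛ = 𝕊⁺ℛ = 0`. -/
theorem total_sl2_generators_and_kernel_invariance (u ℓ₁ ℓ₂ : ℝ) :
    let ℓv : Fin 4 → ℝ := ![ℓ₁, ℓ₂, 1 - ℓ₁, 1 - ℓ₂]
    ∀ p : Fin 4 → ℝ,
      0 < p 0 - p 1 → 0 < p 0 - p 3 → 0 < p 2 - p 1 → 0 < p 2 - p 3 →
      (∀ g : (Fin 4 → ℝ) → ℝ,
        (-(∑ i : Fin 4, pdv i g p) = -(∑ i : Fin 4, Dop u ℓ₁ ℓ₂ i g p)) ∧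
        (∑ i : Fin 4, (p i * pdv i g p + ℓv i * g p)
          = ∑ i : Fin 4, p i * Dop u ℓ₁ ℓ₂ i g p) ∧
        (∑ i : Fin 4, (p i ^ 2 * pdv i g p + 2 * ℓv i * p i * g p)
          = ∑ i : Fin 4, p i ^ 2 * Dop u ℓ₁ ℓ₂ i g p)) ∧
      (-(∑ i : Fin 4, pdv i (Rker u ℓ₁ ℓ₂) p) = 0) ∧
      (∑ i : Fin 4, (p i * pdv i (Rker u ℓ₁ ℓ₂) p + ℓv i * Rker u ℓ₁ ℓ₂ p) = 0) ∧
      (∑ i : Fin 4, (p i ^ 2 * pdv i (Rker u ℓ₁ ℓ₂) p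
        + 2 * ℓv i * p i * Rker u ℓ₁ ℓ₂ p) = 0) := by
  intro ℓv p h12 h14 h32 h34
  have h23 : p 1 - p 2 ≠ 0 := by
    intro h
    linarith
  have ops : ∀ g : (Fin 4 → ℝ) → ℝ,
      (-(∑ i : Fin 4, pdv i g p) = -(∑ i : Fin 4, Dop u ℓ₁ ℓ₂ i g p)) ∧
      (∑ i : Fin 4, (p i * pdv i g p + ℓv i * g p)
        = ∑ i : Fin 4, p i * Dop u ℓ₁ ℓ₂ i g p) ∧
      (∑ i : Fin 4, (p i ^ 2 * pdv i g p + 2 * ℓv i * p i * g p)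
        = ∑ i : Fin 4, p i ^ 2 * Dop u ℓ₁ ℓ₂ i g p) := by
    intro g
    refine ⟨?_, ?_, ?_⟩
    · simp only [Dop, Finset.sum_add_distrib, ← Finset.sum_mul, sum_Dcoef, zero_mul, add_zero]
    · simp only [Dop, mul_add, ← mul_assoc, Finset.sum_add_distrib, ← Finset.sum_mul,
        sum_mul_Dcoef u ℓ₁ ℓ₂ p h12.ne' h14.ne' h23 h34.ne', ℓv]
    · simp only [Dop, mul_add, ← mul_assoc, Finset.sum_add_distrib, ← Finset.sum_mul,
        sum_sq_mul_Dcoef u ℓ₁ ℓ₂ p h12.ne' h14.ne' h23 h34.ne', ℓv]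
  obtain ⟨hm, h0, hp⟩ := ops (Rker u ℓ₁ ℓ₂)
  have hD := Dop_Rker u ℓ₁ ℓ₂ p h12 h14 h32 h34
  refine ⟨ops, ?_, ?_, ?_⟩
  · simp only [hm, hD, Finset.sum_const_zero, neg_zero]
  · simp only [h0, hD, mul_zero, Finset.sum_const_zero]
  · simp only [hp, hD, mul_zero, Finset.sum_const_zero]
end

section
/- Fix u, ℓ₁, ℓ₂ ∈ ℝ and set ℓ₃ = 1-ℓ₁, ℓ₄ = 1-ℓ₂. If R is a C² function on the domain Ω satisfying the four first-order equations 𝒟₁R = 𝒟₂R = 𝒟₃R = 𝒟₄R = 0, then R satisfies the second-order defining equation of the R-operator kernel: z₁₂ ∂₁∂₂R + z₃₄ ∂₃∂₄R = -(u/2 - ℓ₂)∂₁R + (u/2 - ℓ₁)∂₂R - (u/2 - ℓ₄)∂₃R + (u/2 - ℓ₃)∂₄R. -/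
/-- If `∂ᵢR = -Aᵢ R` at `p` and `∂ⱼR = -Aⱼ R` near `p`, then `∂ᵢ∂ⱼR = (Aᵢ Aⱼ - ∂ᵢAⱼ) R` at `p`. The
value `d` of `∂ᵢAⱼ` is given as a line derivative, so that it is found by one-variable calculus. -/
lemma pdv_pdv_eq {i j : Fin 4} {R A : (Fin 4 → ℝ) → ℝ} {p : Fin 4 → ℝ} {a d : ℝ}
    (hR : DifferentiableAt ℝ R p) (hA : DifferentiableAt ℝ A p)
    (hd : HasLineDerivAt ℝ A d p (Pi.single i 1))
    (hi : pdv i R p = -(a * R p))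
    (hj : ∀ᶠ q in nhds p, pdv j R q = -(A q * R q)) :
    pdv i (pdv j R) p = (a * A p - d) * R p := by
  have hd' : fderiv ℝ A p (Pi.single i 1) = d := by
    rw [← hA.lineDeriv_eq_fderiv, hd.lineDeriv]
  have h : fderiv ℝ (pdv j R) p = -(A p • fderiv ℝ R p + R p • fderiv ℝ A p) := by
    rw [Filter.EventuallyEq.fderiv_eq hj]
    exact (hA.hasFDerivAt.mul hR.hasFDerivAt).neg.fderiv
  unfold pdv at hi
  rw [pdv, h]
  simp only [neg_apply, add_apply,
    smul_apply, smul_eq_mul, hi, hd']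
  ring

/-- A `C²` solution of the four first-order equations `𝒟ᵢR = 0` on the domain `Ω`
satisfies the second-order defining (`K₁₂`-) equation of the R-operator kernel:
`z₁₂∂₁∂₂R + z₃₄∂₃∂₄R = -(u/2-ℓ₂)∂₁R + (u/2-ℓ₁)∂₂R - (u/2-ℓ₄)∂₃R + (u/2-ℓ₃)∂₄R`
with `ℓ₃ = 1-ℓ₁`, `ℓ₄ = 1-ℓ₂`. -/
theorem first_order_implies_second_order (u ℓ₁ ℓ₂ : ℝ)
    (R : (Fin 4 → ℝ) → ℝ)
    (hR : ContDiffOn ℝ 2 R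
      {p : Fin 4 → ℝ | 0 < p 0 - p 1 ∧ 0 < p 0 - p 3 ∧ 0 < p 2 - p 1 ∧ 0 < p 2 - p 3})
    (hsys : ∀ p : Fin 4 → ℝ,
      0 < p 0 - p 1 → 0 < p 0 - p 3 → 0 < p 2 - p 1 → 0 < p 2 - p 3 →
      ∀ i : Fin 4, Dop u ℓ₁ ℓ₂ i R p = 0) :
    ∀ p : Fin 4 → ℝ,
      0 < p 0 - p 1 → 0 < p 0 - p 3 → 0 < p 2 - p 1 → 0 < p 2 - p 3 →
      (p 0 - p 1) * pdv 0 (pdv 1 R) p + (p 2 - p 3) * pdv 2 (pdv 3 R) p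
        = -(u / 2 - ℓ₂) * pdv 0 R p + (u / 2 - ℓ₁) * pdv 1 R p
          - (u / 2 - (1 - ℓ₂)) * pdv 2 R p + (u / 2 - (1 - ℓ₁)) * pdv 3 R p := by
  intro p h01 h03 h21 h23
  have hΩ : {p : Fin 4 → ℝ | 0 < p 0 - p 1 ∧ 0 < p 0 - p 3 ∧ 0 < p 2 - p 1 ∧ 0 < p 2 - p 3}
      ∈ nhds p := by
    refine IsOpen.mem_nhds ?_ ⟨h01, h03, h21, h23⟩
    simp only [Set.ofPred_and]
    refine IsOpen.inter ?_ (IsOpen.inter ?_ (IsOpen.inter ?_ ?_)) <;>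
      apply isOpen_lt <;> fun_prop
  have hRp : DifferentiableAt ℝ R p := (hR.contDiffAt hΩ).differentiableAt (by norm_num)
  have hfirst : ∀ i, ∀ᶠ q in nhds p, pdv i R q = -(Dcoef u ℓ₁ ℓ₂ i q * R q) := by
    intro i
    filter_upwards [hΩ] with q hq
    exact eq_neg_of_add_eq_zero_left (hsys q hq.1 hq.2.1 hq.2.2.1 hq.2.2.2 i)
  have n01 : p 0 - p 1 ≠ 0 := h01.ne'
  have n03 : p 0 - p 3 ≠ 0 := h03.ne'
  have n12 : p 1 - p 2 ≠ 0 := ne_of_lt (by linarith)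
  have n23 : p 2 - p 3 ≠ 0 := h23.ne'
  have e (i) := (hfirst i).self_of_nhds
  have hA1 : DifferentiableAt ℝ (Dcoef u ℓ₁ ℓ₂ 1) p := by
    change DifferentiableAt ℝ (fun p : Fin 4 → ℝ =>
      (u + ℓ₂ + (1 - ℓ₁)) / (p 1 - p 2) + (u + (1 - ℓ₁) - ℓ₂) / (p 0 - p 1)) p
    fun_prop (disch := assumption)
  have hA3 : DifferentiableAt ℝ (Dcoef u ℓ₁ ℓ₂ 3) p := by
    change DifferentiableAt ℝ (fun p : Fin 4 → ℝ =>
      -((u + ℓ₁ + (1 - ℓ₂)) / (p 0 - p 3)) + (u + ℓ₁ - (1 - ℓ₂)) / (p 2 - p 3)) p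
    fun_prop (disch := assumption)
  -- Both coefficients depend on the variable in question through one term `c / (x + t)` only.
  have hline (k c x : ℝ) (hx : x ≠ 0) :
      HasDerivAt (fun t : ℝ => k + c / (x + t)) (-c / x ^ 2) 0 := by
    have h := ((((hasDerivAt_id (0 : ℝ)).const_add x).fun_inv (by simpa using hx)).const_mul
      c).const_add k
    simpa [div_eq_mul_inv] using h
  have hd1 : HasLineDerivAt ℝ (Dcoef u ℓ₁ ℓ₂ 1) (-(u + (1 - ℓ₁) - ℓ₂) / (p 0 - p 1) ^ 2) p
      (Pi.single 0 1) := by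
    refine (hline ((u + ℓ₂ + (1 - ℓ₁)) / (p 1 - p 2)) _ _ n01).congr_of_eventuallyEq (.of_forall fun t => ?_)
    simp [Dcoef, add_sub_right_comm]
  have hd3 : HasLineDerivAt ℝ (Dcoef u ℓ₁ ℓ₂ 3) (-(u + ℓ₁ - (1 - ℓ₂)) / (p 2 - p 3) ^ 2) p
      (Pi.single 2 1) := by
    refine (hline (-((u + ℓ₁ + (1 - ℓ₂)) / (p 0 - p 3))) _ _ n23).congr_of_eventuallyEq (.of_forall fun t => ?_)
    simp [Dcoef, add_sub_right_comm]
  rw [pdv_pdv_eq hRp hA1 hd1 (e 0) (hfirst 1), pdv_pdv_eq hRp hA3 hd3 (e 2) (hfirst 3),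
    e 0, e 1, e 2, e 3]
  simp only [Dcoef, Matrix.cons_val]
  field_simp
  ring
end

section
/- Fix real u, ℓ₁, ℓ₂ with ℓ₂-ℓ₁-u > 0, ℓ₁-ℓ₂-u > 0, and ℓ₁+ℓ₂+u > 0, let z₁ < z₂ be real, and let n be a natural number. Then ρ · (z₂-z₁)^{1+u-ℓ₁-ℓ₂} · ∫_{z₁}^{z₂} dz₃ ∫_{z₁}^{z₃} dz₄ (z₄-z₁)^{ℓ₂-ℓ₁-u-1} (z₂-z₃)^{ℓ₁-ℓ₂-u-1} (z₃-z₄)^{ℓ₁+ℓ₂+u-1} (z₃-z₄)ⁿ = Rₙ(u) · (z₁-z₂)ⁿ, where ρ = Γ(ℓ₁+ℓ₂-u)/(Γ(ℓ₁-ℓ₂-u)Γ(ℓ₂-ℓ₁-u)Γ(ℓ₁+ℓ₂+u)) and Rₙ(u) = (-1)ⁿ Γ(-u+ℓ₁+ℓ₂)Γ(u+ℓ₁+ℓ₂+n)/(Γ(u+ℓ₁+ℓ₂)Γ(-u+ℓ₁+ℓ₂+n)). That is, the integral-operator form of the sl(2) R-operator has the lowest weight vectors Ψₙ = (z₁-z₂)ⁿ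 as eigenfunctions with eigenvalues Rₙ(u). -/
/-!
The double integral is an iterated Euler beta integral. With `a = ℓ₂ - ℓ₁ - u`,
`b = ℓ₁ - ℓ₂ - u`, `c = ℓ₁ + ℓ₂ + u`, the `z₄`-integral equals
`(z₃ - z₁)^(a+c+n-1) B(a, c+n)`, after which the `z₃`-integral equals
`(z₂ - z₁)^(a+b+c+n-1) B(a+c+n, b)`. In the product of the two beta values the factor
`Γ(a+c+n)` cancels, leaving `Γ(a) Γ(b) Γ(c+n) / Γ(a+b+c+n)`; since `a + b + c = ℓ₁ + ℓ₂ - u`,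
the prefactors turn this into `Rₙ(u) (z₁ - z₂)ⁿ`.
-/

/-- Euler's beta integral on an interval `[0, r]`, in real form. It is obtained from the complex
scaled beta integral, as real and complex powers agree on nonnegative bases. -/
lemma integral_rpow_mul_rpow_sub (s t r : ℝ) (hs : 0 < s) (ht : 0 < t) (hr : 0 < r) :
    ∫ x in (0 : ℝ)..r, x ^ (s - 1) * (r - x) ^ (t - 1) =
      r ^ (s + t - 1) * (Real.Gamma s * Real.Gamma t / Real.Gamma (s + t)) := by
  have key := Complex.betaIntegral_scaled (s : ℂ) (t : ℂ) hr
  rw [Complex.betaIntegral_eq_Gamma_mul_div _ _ (by simpa using hs) (by simpa using ht)] at key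
  have e : ∫ x in (0 : ℝ)..r, (x : ℂ) ^ ((s : ℂ) - 1) * ((r : ℂ) - x) ^ ((t : ℂ) - 1) =
      ((∫ x in (0 : ℝ)..r, x ^ (s - 1) * (r - x) ^ (t - 1) : ℝ) : ℂ) := by
    rw [← intervalIntegral.integral_ofReal]
    refine intervalIntegral.integral_congr fun x hx => ?_
    rw [Set.uIcc_of_le hr.le] at hx
    simp only [Complex.ofReal_mul, Complex.ofReal_cpow hx.1,
      Complex.ofReal_cpow (sub_nonneg.2 hx.2), Complex.ofReal_sub, Complex.ofReal_one]
  rw [e] at key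
  apply Complex.ofReal_injective
  rw [key]
  simp only [Complex.ofReal_mul, Complex.ofReal_div, Complex.ofReal_cpow hr.le,
    ← Complex.Gamma_ofReal, Complex.ofReal_sub, Complex.ofReal_add, Complex.ofReal_one]

lemma integral_sub_rpow_mul_sub_rpow (s t p q : ℝ) (hs : 0 < s) (ht : 0 < t) (hpq : p < q) :
    ∫ x in p..q, (x - p) ^ (s - 1) * (q - x) ^ (t - 1) =
      (q - p) ^ (s + t - 1) * (Real.Gamma s * Real.Gamma t / Real.Gamma (s + t)) := by
  rw [← integral_rpow_mul_rpow_sub s t (q - p) hs ht (sub_pos.2 hpq)]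
  have := intervalIntegral.integral_comp_sub_right (a := p) (b := q)
    (fun y => y ^ (s - 1) * (q - p - y) ^ (t - 1)) p
  simpa using this


/-- The integral-operator form of the sl(2) R-operator has the lowest weight
vectors `Ψₙ = (z₁-z₂)ⁿ` as eigenfunctions with the eigenvalues
`Rₙ(u) = (-1)ⁿ Γ(-u+ℓ₁+ℓ₂)Γ(u+ℓ₁+ℓ₂+n)/(Γ(u+ℓ₁+ℓ₂)Γ(-u+ℓ₁+ℓ₂+n))`. -/
theorem sl2_R_integral_eigenvalues (u ℓ₁ ℓ₂ : ℝ)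
    (hb : 0 < ℓ₂ - ℓ₁ - u) (hc : 0 < ℓ₁ - ℓ₂ - u) (hd : 0 < ℓ₁ + ℓ₂ + u)
    (z₁ z₂ : ℝ) (h : z₁ < z₂) (n : ℕ) :
    let ρ : ℝ := Real.Gamma (ℓ₁ + ℓ₂ - u) /
      (Real.Gamma (ℓ₁ - ℓ₂ - u) * Real.Gamma (ℓ₂ - ℓ₁ - u) * Real.Gamma (ℓ₁ + ℓ₂ + u))
    let Rn : ℝ := (-1 : ℝ) ^ n *
      (Real.Gamma (-u + ℓ₁ + ℓ₂) * Real.Gamma (u + ℓ₁ + ℓ₂ + n)) /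
      (Real.Gamma (u + ℓ₁ + ℓ₂) * Real.Gamma (-u + ℓ₁ + ℓ₂ + n))
    ρ * (z₂ - z₁) ^ (1 + u - ℓ₁ - ℓ₂) *
      (∫ z₃ in z₁..z₂, ∫ z₄ in z₁..z₃,
        (z₄ - z₁) ^ (ℓ₂ - ℓ₁ - u - 1) * (z₂ - z₃) ^ (ℓ₁ - ℓ₂ - u - 1) *
        (z₃ - z₄) ^ (ℓ₁ + ℓ₂ + u - 1) * (z₃ - z₄) ^ n)
      = Rn * (z₁ - z₂) ^ n := by
  intro ρ Rn
  have hn : (0 : ℝ) ≤ n := n.cast_nonneg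
  have hcn : 0 < ℓ₁ + ℓ₂ + u + n := by linarith
  have hac : 0 < (ℓ₂ - ℓ₁ - u) + (ℓ₁ + ℓ₂ + u + n) := by linarith
  have inner : ∀ z₃, z₁ < z₃ → (∫ z₄ in z₁..z₃,
        (z₄ - z₁) ^ (ℓ₂ - ℓ₁ - u - 1) * (z₂ - z₃) ^ (ℓ₁ - ℓ₂ - u - 1) *
        (z₃ - z₄) ^ (ℓ₁ + ℓ₂ + u - 1) * (z₃ - z₄) ^ n) =
      (Real.Gamma (ℓ₂ - ℓ₁ - u) * Real.Gamma (ℓ₁ + ℓ₂ + u + n) /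
        Real.Gamma ((ℓ₂ - ℓ₁ - u) + (ℓ₁ + ℓ₂ + u + n))) *
      ((z₃ - z₁) ^ ((ℓ₂ - ℓ₁ - u) + (ℓ₁ + ℓ₂ + u + n) - 1) *
        (z₂ - z₃) ^ (ℓ₁ - ℓ₂ - u - 1)) := by
    intro z₃ h3
    have e : (∫ z₄ in z₁..z₃,
        (z₄ - z₁) ^ (ℓ₂ - ℓ₁ - u - 1) * (z₂ - z₃) ^ (ℓ₁ - ℓ₂ - u - 1) *
        (z₃ - z₄) ^ (ℓ₁ + ℓ₂ + u - 1) * (z₃ - z₄) ^ n) =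
      ∫ z₄ in z₁..z₃, (z₂ - z₃) ^ (ℓ₁ - ℓ₂ - u - 1) *
        ((z₄ - z₁) ^ (ℓ₂ - ℓ₁ - u - 1) * (z₃ - z₄) ^ (ℓ₁ + ℓ₂ + u + n - 1)) := by
      -- the powers of `z₃ - z₄` need not combine at `z₄ = z₃`, a null set
      refine intervalIntegral.integral_congr_Ioo_of_le h3.le fun z₄ hz => ?_
      have hp : 0 < z₃ - z₄ := sub_pos.2 hz.2
      have : ℓ₁ + ℓ₂ + u + n - 1 = (ℓ₁ + ℓ₂ + u - 1) + n := by ring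
      simp only [this, Real.rpow_add hp, Real.rpow_natCast]
      ring
    rw [e, intervalIntegral.integral_const_mul,
      integral_sub_rpow_mul_sub_rpow _ _ _ _ hb hcn h3]
    ring
  have outer : (∫ z₃ in z₁..z₂, ∫ z₄ in z₁..z₃,
        (z₄ - z₁) ^ (ℓ₂ - ℓ₁ - u - 1) * (z₂ - z₃) ^ (ℓ₁ - ℓ₂ - u - 1) *
        (z₃ - z₄) ^ (ℓ₁ + ℓ₂ + u - 1) * (z₃ - z₄) ^ n) =
      ∫ z₃ in z₁..z₂, (Real.Gamma (ℓ₂ - ℓ₁ - u) * Real.Gamma (ℓ₁ + ℓ₂ + u + n) /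
        Real.Gamma ((ℓ₂ - ℓ₁ - u) + (ℓ₁ + ℓ₂ + u + n))) *
      ((z₃ - z₁) ^ ((ℓ₂ - ℓ₁ - u) + (ℓ₁ + ℓ₂ + u + n) - 1) *
        (z₂ - z₃) ^ (ℓ₁ - ℓ₂ - u - 1)) :=
    intervalIntegral.integral_congr_Ioo_of_le h.le fun z₃ hz => inner z₃ hz.1
  rw [outer, intervalIntegral.integral_const_mul,
    integral_sub_rpow_mul_sub_rpow _ _ _ _ hac hc h]
  have hz : 0 < z₂ - z₁ := sub_pos.2 h
  have hpow : (z₂ - z₁) ^ (1 + u - ℓ₁ - ℓ₂) *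
      (z₂ - z₁) ^ ((ℓ₂ - ℓ₁ - u) + (ℓ₁ + ℓ₂ + u + n) + (ℓ₁ - ℓ₂ - u) - 1) =
      (z₂ - z₁) ^ n := by
    rw [← Real.rpow_add hz, ← Real.rpow_natCast]
    congr 1
    ring
  have hsign : (z₂ - z₁) ^ n = (-1 : ℝ) ^ n * (z₁ - z₂) ^ n := by
    rw [← mul_pow]
    congr 1
    ring
  have g1 := (Real.Gamma_pos_of_pos hb).ne'
  have g2 := (Real.Gamma_pos_of_pos hc).ne'
  have g3 := (Real.Gamma_pos_of_pos hd).ne'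
  have g4 := (Real.Gamma_pos_of_pos hac).ne'
  have hs : 0 < ℓ₁ + ℓ₂ - u + n := by linarith
  have g5 := (Real.Gamma_pos_of_pos hs).ne'
  simp only [ρ, Rn]
  rw [show (ℓ₂ - ℓ₁ - u) + (ℓ₁ + ℓ₂ + u + n) + (ℓ₁ - ℓ₂ - u) = ℓ₁ + ℓ₂ - u + n by ring]
    at hpow ⊢
  rw [show -u + ℓ₁ + ℓ₂ + n = ℓ₁ + ℓ₂ - u + n by ring, show -u + ℓ₁ + ℓ₂ = ℓ₁ + ℓ₂ - u by ring,
    show u + ℓ₁ + ℓ₂ + n = ℓ₁ + ℓ₂ + u + n by ring, show u + ℓ₁ + ℓ₂ = ℓ₁ + ℓ₂ + u by ring]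
  rw [hsign] at hpow
  generalize (ℓ₂ - ℓ₁ - u) + (ℓ₁ + ℓ₂ + u + n) = m at *
  calc _ = Real.Gamma (ℓ₁ + ℓ₂ - u) * Real.Gamma (ℓ₁ + ℓ₂ + u + n) /
        (Real.Gamma (ℓ₁ + ℓ₂ + u) * Real.Gamma (ℓ₁ + ℓ₂ - u + n)) *
        ((z₂ - z₁) ^ (1 + u - ℓ₁ - ℓ₂) * (z₂ - z₁) ^ (ℓ₁ + ℓ₂ - u + n - 1)) := by
        field_simp
    _ = _ := by rw [hpow]; ring
end

section
/- For all (ℓ₁,b₁), (ℓ₂,b₂) ∈ ℂ² and every natural number n, the even two-point functions Φₙ± = (Z₁₂ ± ½θ₁₂θ̄₁₂)ⁿ in the two-site sl(2|1) realization are lowest weight vectors: they are annihilated by the total lowering generators S⁻ = S₁⁻+S₂⁻, V⁻ = V₁⁻+V₂⁻, W⁻ = W₁⁻+W₂⁻, and are eigenvectors of the total Cartan generators with S Φₙ± = (n + ℓ₁ + ℓ₂) Φₙ± and B Φₙ± = (b₁ + b₂) Φₙ±. -/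
/-!
Write `L_c` for left multiplication by the even element `Z₁₂ + c θ₁₂θ̄₁₂`, so that
`Φₙ±` is the `n`-th iterate of `L_{±1/2}` applied to `1`. The elements `Z₁₂` and `θ₁₂θ̄₁₂` are
invariant under `S⁻, V⁻, W⁻` and have weight `1` under `S - ℓ₁ - ℓ₂` and `0` under `B - b₁ - b₂`.
For the generators, acting as derivations plus constants, this means that `S⁻, V⁻, W⁻, B` commute
with `L_c`, while `[S, L_c] = L_c`. The claim follows by induction on `n`, starting from the
action of the generators on `1`.

The commutators are computed by normal ordering with the canonical relations
`θⱼθₖ = -θₖθⱼ`, `∂ⱼθₖ + θₖ∂ⱼ = δⱼₖ` and `[∂ᵢ, p] = ∂p/∂zᵢ`, which are derived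
from the componentwise definitions at the start.
-/

open MvPolynomial

/-! The two-site sl(2|1) realization on `ℂ[z₁,z₂] ⊗ Λ(θ₁,θ̄₁,θ₂,θ̄₂)`.

An element is encoded as a function `Finset (Fin 4) → ℂ[z₁,z₂]`, the value at `s`
being the coefficient of the ordered monomial `∏_{j ∈ s} θⱼ` (with odd generators
`θ₁ = θ_0`, `θ̄₁ = θ_1`, `θ₂ = θ_2`, `θ̄₂ = θ_3`, factors in increasing order). -/

/-- Elements of `ℂ[z₁,z₂] ⊗ Λ(θ₁,θ̄₁,θ₂,θ̄₂)` in components. -/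
abbrev GrassTwo : Type := Finset (Fin 4) → MvPolynomial (Fin 2) ℂ

namespace GrassTwo

/-- Koszul sign `(-1)^{#{k ∈ s : k < j}}`. -/
noncomputable def sgn (j : Fin 4) (s : Finset (Fin 4)) : MvPolynomial (Fin 2) ℂ :=
  (-1) ^ ((s.filter (fun k => k < j)).card)

/-- Left multiplication by the odd generator `θⱼ`. -/
noncomputable def mulθ (j : Fin 4) (f : GrassTwo) : GrassTwo := fun s =>
  if j ∈ s then sgn j s * f (s.erase j) else 0

/-- The left odd derivation `∂_{θⱼ}`. -/
noncomputable def dθ (j : Fin 4) (f : GrassTwo) : GrassTwo := fun s =>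
  if j ∈ s then 0 else sgn j s * f (insert j s)

/-- The even derivative `∂ᵢ = ∂/∂zᵢ`, acting on components. -/
noncomputable def pd (i : Fin 2) (f : GrassTwo) : GrassTwo := fun s => pderiv i (f s)

/-- Multiplication by a polynomial in `z₁, z₂`, acting on components. -/
noncomputable def mulP (p : MvPolynomial (Fin 2) ℂ) (f : GrassTwo) : GrassTwo :=
  fun s => p * f s

/-- The unit element `1`. -/
noncomputable def one : GrassTwo := fun s => if s = ∅ then 1 else 0

/-- Total lowering generator `S⁻ = S₁⁻ + S₂⁻ = -∂₁ - ∂₂`. -/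
noncomputable def Sm (f : GrassTwo) : GrassTwo := -pd 0 f - pd 1 f

/-- Total lowering generator `V⁻ = V₁⁻ + V₂⁻ = ∂_{θ₁} + ½θ̄₁∂₁ + ∂_{θ₂} + ½θ̄₂∂₂`. -/
noncomputable def Vm (f : GrassTwo) : GrassTwo :=
  dθ 0 f + mulP (C (1 / 2)) (mulθ 1 (pd 0 f))
    + dθ 2 f + mulP (C (1 / 2)) (mulθ 3 (pd 1 f))

/-- Total lowering generator `W⁻ = W₁⁻ + W₂⁻ = ∂_{θ̄₁} + ½θ₁∂₁ + ∂_{θ̄₂} + ½θ₂∂₂`. -/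
noncomputable def Wm (f : GrassTwo) : GrassTwo :=
  dθ 1 f + mulP (C (1 / 2)) (mulθ 0 (pd 0 f))
    + dθ 3 f + mulP (C (1 / 2)) (mulθ 2 (pd 1 f))

/-- Total Cartan generator
`S = Σᵢ (zᵢ∂ᵢ + ½θᵢ∂_{θᵢ} + ½θ̄ᵢ∂_{θ̄ᵢ} + ℓᵢ)`. -/
noncomputable def Stot (ℓ₁ ℓ₂ : ℂ) (f : GrassTwo) : GrassTwo :=
  mulP (X 0) (pd 0 f) + mulP (C (1 / 2)) (mulθ 0 (dθ 0 f))
    + mulP (C (1 / 2)) (mulθ 1 (dθ 1 f)) + mulP (C ℓ₁) f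
    + mulP (X 1) (pd 1 f) + mulP (C (1 / 2)) (mulθ 2 (dθ 2 f))
    + mulP (C (1 / 2)) (mulθ 3 (dθ 3 f)) + mulP (C ℓ₂) f

/-- Total Cartan generator `B = Σᵢ (½θ̄ᵢ∂_{θ̄ᵢ} - ½θᵢ∂_{θᵢ} + bᵢ)`. -/
noncomputable def Btot (b₁ b₂ : ℂ) (f : GrassTwo) : GrassTwo :=
  mulP (C (1 / 2)) (mulθ 1 (dθ 1 f)) - mulP (C (1 / 2)) (mulθ 0 (dθ 0 f)) + mulP (C b₁) f
    + mulP (C (1 / 2)) (mulθ 3 (dθ 3 f)) - mulP (C (1 / 2)) (mulθ 2 (dθ 2 f)) + mulP (C b₂) f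

/-- Left multiplication by the superdifference
`Z₁₂ = z₁ - z₂ + ½(θ̄₁θ₂ + θ₁θ̄₂)`. -/
noncomputable def mulZ (f : GrassTwo) : GrassTwo :=
  mulP (X 0 - X 1) f + mulP (C (1 / 2)) (mulθ 1 (mulθ 2 f) + mulθ 0 (mulθ 3 f))

/-- Left multiplication by `θ₁₂θ̄₁₂ = (θ₁-θ₂)(θ̄₁-θ̄₂)`. -/
noncomputable def mulθθ (f : GrassTwo) : GrassTwo :=
  mulθ 0 (mulθ 1 f - mulθ 3 f) - mulθ 2 (mulθ 1 f - mulθ 3 f)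

/-- The even lowest weight vectors `Φₙ± = (Z₁₂ ± ½θ₁₂θ̄₁₂)ⁿ`. -/
noncomputable def Φplus (n : ℕ) : GrassTwo :=
  (fun f => mulZ f + mulP (C (1 / 2)) (mulθθ f))^[n] one

/-- The even lowest weight vectors `Φₙ± = (Z₁₂ ± ½θ₁₂θ̄₁₂)ⁿ`. -/
noncomputable def Φminus (n : ℕ) : GrassTwo :=
  (fun f => mulZ f - mulP (C (1 / 2)) (mulθθ f))^[n] one

end GrassTwo

namespace GrassTwo

/-! ### Canonical relations -/

lemma sgn_insert {j k : Fin 4} {s : Finset (Fin 4)} (hk : k ∉ s) :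
    sgn j (insert k s) = if k < j then -sgn j s else sgn j s := by
  unfold sgn
  rw [Finset.filter_insert]
  split_ifs with h
  · rw [Finset.card_insert_of_notMem (by simp [hk]), pow_succ]
    ring
  · rfl

lemma sgn_erase {j k : Fin 4} {s : Finset (Fin 4)} (hk : k ∈ s) :
    sgn j (s.erase k) = if k < j then -sgn j s else sgn j s := by
  have h := sgn_insert (j := j) (Finset.notMem_erase k s)
  rw [Finset.insert_erase hk] at h
  split_ifs at h ⊢ <;> simp [h]

lemma sgn_mul_self (j : Fin 4) (s : Finset (Fin 4)) : sgn j s * sgn j s = 1 := by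
  unfold sgn
  rw [← mul_pow]
  simp

lemma mulθ_sq (j : Fin 4) (f : GrassTwo) : mulθ j (mulθ j f) = 0 := by
  ext1 s
  simp [mulθ]

lemma mulθ_anticomm {j k : Fin 4} (h : k < j) (f : GrassTwo) :
    mulθ j (mulθ k f) = -mulθ k (mulθ j f) := by
  ext1 s
  by_cases hj : j ∈ s <;> by_cases hk : k ∈ s <;>
    simp [mulθ, hj, hk, h.ne, h.ne', sgn_erase, h, h.not_gt, Finset.erase_right_comm (a := j)]
  ring

lemma dθ_mulθ_self (j : Fin 4) (f : GrassTwo) :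
    dθ j (mulθ j f) = f - mulθ j (dθ j f) := by
  ext1 s
  by_cases hj : j ∈ s
  · simp [mulθ, dθ, hj, sgn_erase, ← mul_assoc, sgn_mul_self]
  · simp [mulθ, dθ, hj, sgn_insert, ← mul_assoc, sgn_mul_self]

lemma dθ_mulθ {j k : Fin 4} (h : j ≠ k) (f : GrassTwo) :
    dθ j (mulθ k f) = -mulθ k (dθ j f) := by
  ext1 s
  by_cases hj : j ∈ s <;> by_cases hk : k ∈ s <;>
    simp [mulθ, dθ, hj, hk, h, h.symm]
  rw [Finset.erase_insert_of_ne h, sgn_erase hk, sgn_insert hj]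
  rcases lt_or_gt_of_ne h with h' | h' <;> simp [h', h'.not_gt] <;> ring

lemma pd_mulθ (i : Fin 2) (j : Fin 4) (f : GrassTwo) :
    pd i (mulθ j f) = mulθ j (pd i f) := by
  ext1 s
  by_cases hj : j ∈ s <;> simp [mulθ, pd, hj, sgn, Derivation.leibniz, Derivation.leibniz_pow]

lemma pd_smul (i : Fin 2) (p : MvPolynomial (Fin 2) ℂ) (f : GrassTwo) :
    pd i (p • f) = pderiv i p • f + p • pd i f := by
  ext1 s
  simp [pd, Derivation.leibniz]
  ring

/-! ### Linearity -/

lemma mulP_eq_smul (p : MvPolynomial (Fin 2) ℂ) (f : GrassTwo) : mulP p f = p • f := rfl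

lemma C_smul_eq (a : ℂ) (f : GrassTwo) : (C a : MvPolynomial (Fin 2) ℂ) • f = a • f := by
  ext1 s
  simp [C_mul']

lemma mulθ_add (j : Fin 4) (f g : GrassTwo) : mulθ j (f + g) = mulθ j f + mulθ j g := by
  ext1 s
  by_cases hj : j ∈ s <;> simp [mulθ, hj, mul_add]

lemma mulθ_smul (j : Fin 4) (p : MvPolynomial (Fin 2) ℂ) (f : GrassTwo) :
    mulθ j (p • f) = p • mulθ j f := by
  ext1 s
  by_cases hj : j ∈ s <;> simp [mulθ, hj, mul_left_comm]

lemma mulθ_neg (j : Fin 4) (f : GrassTwo) : mulθ j (-f) = -mulθ j f := by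
  simpa using mulθ_smul j (-1) f

lemma mulθ_sub (j : Fin 4) (f g : GrassTwo) : mulθ j (f - g) = mulθ j f - mulθ j g := by
  rw [sub_eq_add_neg, mulθ_add, mulθ_neg, sub_eq_add_neg]

lemma mulθ_zero (j : Fin 4) : mulθ j 0 = 0 := by
  simpa using mulθ_smul j 0 0

lemma dθ_add (j : Fin 4) (f g : GrassTwo) : dθ j (f + g) = dθ j f + dθ j g := by
  ext1 s
  by_cases hj : j ∈ s <;> simp [dθ, hj, mul_add]

lemma dθ_smul (j : Fin 4) (p : MvPolynomial (Fin 2) ℂ) (f : GrassTwo) :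
    dθ j (p • f) = p • dθ j f := by
  ext1 s
  by_cases hj : j ∈ s <;> simp [dθ, hj, mul_left_comm]

lemma dθ_neg (j : Fin 4) (f : GrassTwo) : dθ j (-f) = -dθ j f := by
  simpa using dθ_smul j (-1) f

lemma dθ_sub (j : Fin 4) (f g : GrassTwo) : dθ j (f - g) = dθ j f - dθ j g := by
  rw [sub_eq_add_neg, dθ_add, dθ_neg, sub_eq_add_neg]

lemma pd_add (i : Fin 2) (f g : GrassTwo) : pd i (f + g) = pd i f + pd i g := by
  ext1 s
  simp [pd]

lemma pd_neg (i : Fin 2) (f : GrassTwo) : pd i (-f) = -pd i f := by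
  ext1 s
  simp [pd]

lemma pd_sub (i : Fin 2) (f g : GrassTwo) : pd i (f - g) = pd i f - pd i g := by
  ext1 s
  simp [pd]

/-! ### Commutators with multiplication by the superdifference -/

/-- Left multiplication by the even element `Z₁₂ + c θ₁₂θ̄₁₂`. -/
noncomputable def mulL (c : ℂ) (f : GrassTwo) : GrassTwo := mulZ f + mulP (C c) (mulθθ f)

lemma mulL_zero (c : ℂ) : mulL c 0 = 0 := by
  simp [mulL, mulZ, mulθθ, mulP_eq_smul, mulθ_zero]

lemma mulL_smul (c a : ℂ) (f : GrassTwo) : mulL c (a • f) = a • mulL c f := by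
  rw [← C_smul_eq, ← C_smul_eq]
  simp only [mulL, mulZ, mulθθ, mulP_eq_smul, mulθ_smul, mulθ_sub]
  module

lemma Sm_mulL (c : ℂ) (f : GrassTwo) : Sm (mulL c f) = mulL c (Sm f) := by
  simp [Sm, mulL, mulZ, mulθθ, mulP_eq_smul, mulθ_sub, mulθ_neg, pd_add, pd_sub, pd_smul,
    pd_mulθ, pderiv_X]
  module

lemma Vm_mulL (c : ℂ) (f : GrassTwo) : Vm (mulL c f) = mulL c (Vm f) := by
  simp [Vm, mulL, mulZ, mulθθ, mulP_eq_smul, mulθ_smul, mulθ_sub, mulθ_add, mulθ_neg, pd_add,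
    pd_sub, pd_neg, pd_smul, pd_mulθ, pderiv_X, dθ_add, dθ_sub, dθ_neg, dθ_smul, dθ_mulθ_self,
    dθ_mulθ, mulθ_anticomm, mulθ_sq, mulθ_zero]
  module

lemma Wm_mulL (c : ℂ) (f : GrassTwo) : Wm (mulL c f) = mulL c (Wm f) := by
  simp [Wm, mulL, mulZ, mulθθ, mulP_eq_smul, mulθ_smul, mulθ_sub, mulθ_add, mulθ_neg, pd_add,
    pd_sub, pd_neg, pd_smul, pd_mulθ, pderiv_X, dθ_add, dθ_sub, dθ_neg, dθ_smul, dθ_mulθ_self,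
    dθ_mulθ, mulθ_anticomm, mulθ_sq, mulθ_zero]
  module

lemma Stot_mulL (ℓ₁ ℓ₂ c : ℂ) (f : GrassTwo) :
    Stot ℓ₁ ℓ₂ (mulL c f) = mulL c (Stot ℓ₁ ℓ₂ f) + mulL c f := by
  simp [Stot, mulL, mulZ, mulθθ, mulP_eq_smul, mulθ_smul, mulθ_sub, mulθ_add, mulθ_neg, pd_add,
    pd_sub, pd_neg, pd_smul, pd_mulθ, pderiv_X, dθ_add, dθ_sub, dθ_neg, dθ_smul, dθ_mulθ_self,
    dθ_mulθ, mulθ_anticomm, mulθ_sq, mulθ_zero]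
  have half : C 2⁻¹ + C 2⁻¹ = (1 : MvPolynomial (Fin 2) ℂ) := by
    rw [← C_add]
    norm_num
  match_scalars <;> grind

lemma Btot_mulL (b₁ b₂ c : ℂ) (f : GrassTwo) :
    Btot b₁ b₂ (mulL c f) = mulL c (Btot b₁ b₂ f) := by
  simp [Btot, mulL, mulZ, mulθθ, mulP_eq_smul, mulθ_smul, mulθ_sub, mulθ_add, mulθ_neg,
    dθ_add, dθ_sub, dθ_neg, dθ_smul, dθ_mulθ_self,
    dθ_mulθ, mulθ_anticomm, mulθ_sq, mulθ_zero]
  module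

/-! ### The lowest weight property -/

lemma pd_one (i : Fin 2) : pd i one = 0 := by
  ext1 s
  by_cases hs : s = ∅ <;> simp [pd, one, hs]

lemma dθ_one (j : Fin 4) : dθ j one = 0 := by
  ext1 s
  simp [dθ, one]

lemma lowest_weight (ℓ₁ b₁ ℓ₂ b₂ c : ℂ) (n : ℕ) :
    Sm ((mulL c)^[n] one) = 0 ∧ Vm ((mulL c)^[n] one) = 0 ∧ Wm ((mulL c)^[n] one) = 0 ∧
      Stot ℓ₁ ℓ₂ ((mulL c)^[n] one) = ((n : ℂ) + ℓ₁ + ℓ₂) • (mulL c)^[n] one ∧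
      Btot b₁ b₂ ((mulL c)^[n] one) = (b₁ + b₂) • (mulL c)^[n] one := by
  induction n with
  | zero =>
    refine ⟨?_, ?_, ?_, ?_, ?_⟩ <;>
      simp [Sm, Vm, Wm, Stot, Btot, pd_one, dθ_one, mulP_eq_smul, mulθ_zero, C_smul_eq, add_smul]
  | succ n ih =>
    obtain ⟨h₁, h₂, h₃, h₄, h₅⟩ := ih
    rw [Function.iterate_succ_apply', Sm_mulL, Vm_mulL, Wm_mulL, Stot_mulL, Btot_mulL,
      h₁, h₂, h₃, h₄, h₅, mulL_zero, mulL_smul, mulL_smul]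
    refine ⟨rfl, rfl, rfl, ?_, rfl⟩
    push_cast
    module

lemma Φplus_eq (n : ℕ) : Φplus n = (mulL (1 / 2))^[n] one := rfl

lemma Φminus_eq (n : ℕ) : Φminus n = (mulL (-(1 / 2)))^[n] one := by
  have h : (fun f => mulZ f - mulP (C (1 / 2)) (mulθθ f)) = mulL (-(1 / 2)) := by
    funext f
    rw [mulL, mulP_eq_smul, mulP_eq_smul, C_neg, neg_smul, sub_eq_add_neg]
  rw [Φminus, h]

end GrassTwo

open GrassTwo in
/-- The even two-point functions `Φₙ± = (Z₁₂ ± ½θ₁₂θ̄₁₂)ⁿ` are lowest weight vectors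
of the two-site sl(2|1) realization: they are annihilated by the total lowering
generators `S⁻, V⁻, W⁻` and satisfy `S Φₙ± = (n+ℓ₁+ℓ₂) Φₙ±`,
`B Φₙ± = (b₁+b₂) Φₙ±`. -/
theorem sl21_even_lowest_weight_vectors (ℓ₁ b₁ ℓ₂ b₂ : ℂ) (n : ℕ) :
    (Sm (Φplus n) = 0 ∧ Vm (Φplus n) = 0 ∧ Wm (Φplus n) = 0 ∧
      Stot ℓ₁ ℓ₂ (Φplus n) = ((n : ℂ) + ℓ₁ + ℓ₂) • Φplus n ∧
      Btot b₁ b₂ (Φplus n) = (b₁ + b₂) • Φplus n) ∧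
    (Sm (Φminus n) = 0 ∧ Vm (Φminus n) = 0 ∧ Wm (Φminus n) = 0 ∧
      Stot ℓ₁ ℓ₂ (Φminus n) = ((n : ℂ) + ℓ₁ + ℓ₂) • Φminus n ∧
      Btot b₁ b₂ (Φminus n) = (b₁ + b₂) • Φminus n) := by
  rw [Φplus_eq, Φminus_eq]
  exact ⟨lowest_weight .., lowest_weight ..⟩
end
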